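/- Let Q(x,y,z) = z(x² + ay² + bz² + cxz + dyz) with a, b, c, d ∈ ℝ, and suppose that for every e ∈ ℝ³ the quadratic form Q_e = ∂_e Q is degenerate (its 3×3 symmetric matrix is singular). Then a = 0 and d = 0; in particular Q = z(x² + bz² + cxz) is a function of the two variables x and z. -/

import Mathlib

/-!
The symmetric matrix of `∂ₑQ` is
`!![e₂, 0, e₀ + c e₂; 0, a e₂, a e₁ + d e₂; e₀ + c e₂, a e₁ + d e₂, c e₀ + d e₁ + 3 b e₂]`.
On the line `e = (t, 0, 1)` its determinant is the quadratic polynomial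
`-a t² - a c t + (3ab - ac² - d²)` in `t`. The second difference of this polynomial at `0`
is `-2a`, so its vanishing forces `a = 0`, and then the constant term `-d²` forces `d = 0`.
-/

open MvPolynomial

/-- Directional derivative `∂ₑQ` of a polynomial `Q` in direction `e`. -/
noncomputable def dirDeriv (e : Fin 3 → ℝ) (Q : MvPolynomial (Fin 3) ℝ) :
    MvPolynomial (Fin 3) ℝ :=
  ∑ i, MvPolynomial.C (e i) * MvPolynomial.pderiv i Q

/-- Determinant of the 3×3 Hessian matrix (of second partial derivatives) of a
polynomial `R`; for a quadratic form `R` this vanishes iff its associated symmetric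
matrix is singular. -/
noncomputable def hessDet (R : MvPolynomial (Fin 3) ℝ) : ℝ :=
  Matrix.det (Matrix.of fun i j =>
    MvPolynomial.eval (0 : Fin 3 → ℝ) (MvPolynomial.pderiv i (MvPolynomial.pderiv j R)))

section Hessian

variable {σ R : Type*} [CommSemiring R]

/-- The directional derivative `∂ₑP = ∑ i, e i ∂ᵢP` of a polynomial over any commutative
semiring; over `ℝ` and in three variables it unfolds to the same term as `dirDeriv e P`. -/
noncomputable def directionalDeriv [Fintype σ] (e : σ → R) (P : MvPolynomial σ R) :
    MvPolynomial σ R :=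
  ∑ i, C (e i) * pderiv i P

/-- The matrix of second partial derivatives of `P`, evaluated at the point `x`. -/
noncomputable def hessianAt (x : σ → R) (P : MvPolynomial σ R) : Matrix σ σ R :=
  Matrix.of fun i j => eval x (pderiv i (pderiv j P))

/-- The quadratic form `∑ i j, M i j Xᵢ Xⱼ` of a square matrix `M`, as a polynomial. -/
noncomputable def quadraticPolynomial [Fintype σ] (M : Matrix σ σ R) : MvPolynomial σ R :=
  ∑ i, ∑ j, C (M i j) * (X i * X j)

theorem pderiv_quadraticPolynomial [Fintype σ] (M : Matrix σ σ R) (j : σ) :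
    pderiv j (quadraticPolynomial M) = ∑ k, C (M j k + M k j) * X k := by
  classical
  simp [quadraticPolynomial, pderiv_X, Pi.single_apply, mul_add, add_mul,
    Finset.sum_add_distrib, add_comm]

theorem hessianAt_quadraticPolynomial [Fintype σ] (x : σ → R) (M : Matrix σ σ R) :
    hessianAt x (quadraticPolynomial M) = M + M.transpose := by
  classical
  ext i j
  simp [hessianAt, pderiv_quadraticPolynomial, pderiv_X, Pi.single_apply, add_comm]

end Hessian

theorem det_hessianAt_quadraticPolynomial_of_isSymm {σ R : Type*} [Fintype σ] [DecidableEq σ]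
    [CommRing R] (x : σ → R) {M : Matrix σ σ R} (hM : M.IsSymm) :
    (hessianAt x (quadraticPolynomial M)).det = 2 ^ Fintype.card σ * M.det := by
  rw [hessianAt_quadraticPolynomial, hM.eq, ← two_smul R M, Matrix.det_smul]

section ReducibleCubic

variable {R : Type*} [CommSemiring R]

/-- The cubic form `z (x² + a y² + b z² + c x z + d y z)`, with `x, y, z` encoded as
`X 0, X 1, X 2`. -/
noncomputable def reducibleCubic (a b c d : R) : MvPolynomial (Fin 3) R :=
  X 2 * (X 0 ^ 2 + C a * X 1 ^ 2 + C b * X 2 ^ 2 + C c * X 0 * X 2 + C d * X 1 * X 2)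

/-- The symmetric matrix of the quadratic form `∂ₑ (reducibleCubic a b c d)`. -/
def reducibleCubicMatrix (a b c d : R) (e : Fin 3 → R) : Matrix (Fin 3) (Fin 3) R :=
  !![e 2, 0, e 0 + c * e 2;
     0, a * e 2, a * e 1 + d * e 2;
     e 0 + c * e 2, a * e 1 + d * e 2, c * e 0 + d * e 1 + 3 * b * e 2]

theorem reducibleCubicMatrix_isSymm (a b c d : R) (e : Fin 3 → R) :
    (reducibleCubicMatrix a b c d e).IsSymm := by
  ext i j
  fin_cases i <;> fin_cases j <;> rfl

theorem pderiv_zero_reducibleCubic (a b c d : R) :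
    pderiv 0 (reducibleCubic a b c d) = 2 * X 0 * X 2 + C c * X 2 ^ 2 := by
  simp only [reducibleCubic, map_add, Derivation.leibniz, Derivation.leibniz_pow, derivation_C,
    pderiv_X, Pi.single_apply, Fin.reduceEq, if_true, if_false, smul_eq_mul, nsmul_eq_mul,
    Nat.cast_ofNat]
  ring

theorem pderiv_one_reducibleCubic (a b c d : R) :
    pderiv 1 (reducibleCubic a b c d) = 2 * C a * X 1 * X 2 + C d * X 2 ^ 2 := by
  simp only [reducibleCubic, map_add, Derivation.leibniz, Derivation.leibniz_pow, derivation_C,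
    pderiv_X, Pi.single_apply, Fin.reduceEq, if_true, if_false, smul_eq_mul, nsmul_eq_mul,
    Nat.cast_ofNat]
  ring

theorem pderiv_two_reducibleCubic (a b c d : R) :
    pderiv 2 (reducibleCubic a b c d) =
      X 0 ^ 2 + C a * X 1 ^ 2 + 3 * C b * X 2 ^ 2 +
        2 * C c * X 0 * X 2 + 2 * C d * X 1 * X 2 := by
  simp only [reducibleCubic, map_add, Derivation.leibniz, Derivation.leibniz_pow, derivation_C,
    pderiv_X, Pi.single_apply, Fin.reduceEq, if_true, if_false, smul_eq_mul, nsmul_eq_mul,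
    Nat.cast_ofNat]
  ring

theorem directionalDeriv_reducibleCubic (a b c d : R) (e : Fin 3 → R) :
    directionalDeriv e (reducibleCubic a b c d) =
      quadraticPolynomial (reducibleCubicMatrix a b c d e) := by
  have h_three : (C 3 : MvPolynomial (Fin 3) R) = 3 := map_ofNat C 3
  simp only [directionalDeriv, Fin.sum_univ_three, pderiv_zero_reducibleCubic,
    pderiv_one_reducibleCubic, pderiv_two_reducibleCubic, quadraticPolynomial,
    reducibleCubicMatrix, Matrix.of_apply, Matrix.cons_val, C_0, C_add, C_mul, h_three]
  ring

end ReducibleCubic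

section Degenerate

variable {R : Type*} [CommRing R]

theorem det_reducibleCubicMatrix_line (a b c d t : R) :
    (reducibleCubicMatrix a b c d ![t, 0, 1]).det =
      -a * t ^ 2 - a * c * t + (3 * a * b - a * c ^ 2 - d ^ 2) := by
  simp only [reducibleCubicMatrix, Matrix.det_fin_three, Matrix.of_apply, Matrix.cons_val]
  ring

theorem eq_zero_of_det_reducibleCubicMatrix_eq_zero [IsReduced R] (h_two : IsLeftRegular (2 : R))
    {a b c d : R} (h_det : ∀ e, (reducibleCubicMatrix a b c d e).det = 0) :
    a = 0 ∧ d = 0 := by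
  have h_line (t : R) : -a * t ^ 2 - a * c * t + (3 * a * b - a * c ^ 2 - d ^ 2) = 0 := by
    rw [← det_reducibleCubicMatrix_line, h_det]
  have h_two_mul : 2 * a = 0 := by
    linear_combination 2 * h_line 0 - h_line 1 - h_line (-1)
  have ha : a = 0 := h_two.mul_left_eq_zero_iff.mp h_two_mul
  subst ha
  have hd : d ^ 2 = 0 := by linear_combination -h_line 0
  exact ⟨rfl, eq_zero_of_pow_eq_zero hd⟩

theorem reducible_cubic_degenerate_implies_two_variables_general [IsReduced R]
    (h_two : IsLeftRegular (2 : R)) (x : Fin 3 → R) (a b c d : R)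
    (h_deg : ∀ e : Fin 3 → R,
      (hessianAt x (directionalDeriv e (reducibleCubic a b c d))).det = 0) :
    a = 0 ∧ d = 0 := by
  refine eq_zero_of_det_reducibleCubicMatrix_eq_zero (b := b) (c := c) h_two fun e => ?_
  have h_scaled : 2 ^ 3 * (reducibleCubicMatrix a b c d e).det = 0 := by
    simpa only [directionalDeriv_reducibleCubic, Fintype.card_fin,
      det_hessianAt_quadraticPolynomial_of_isSymm x (reducibleCubicMatrix_isSymm a b c d e)]
      using h_deg e
  exact (h_two.pow 3).mul_left_eq_zero_iff.mp h_scaled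

end Degenerate

/-- If all the directional derivatives of the reducible cubic
`Q = z(x² + ay² + bz² + cxz + dyz)` are degenerate quadratic forms, then `a = 0` and
`d = 0`, so `Q = z(x² + bz² + cxz)` depends only on the two variables `x, z`. -/
theorem reducible_cubic_degenerate_implies_two_variables (a b c d : ℝ)
    (h_deg : ∀ e : Fin 3 → ℝ,
      hessDet (dirDeriv e
        (X 2 * (X 0 ^ 2 + C a * X 1 ^ 2 + C b * X 2 ^ 2 +
          C c * X 0 * X 2 + C d * X 1 * X 2))) = 0) :
    a = 0 ∧ d = 0 :=
  reducible_cubic_degenerate_implies_two_variables_general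
    (IsLeftCancelMulZero.mul_left_cancel_of_ne_zero two_ne_zero) 0 a b c d h_deg
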